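/- For every nonempty closed subset σ of the complex plane there exist a complex Hilbert space H, a dense subspace D of H, and a linear operator A : D → H with closed graph (i.e., if x_k ∈ D, x_k → x in H and A x_k → y in H, then x ∈ D and A x = y) which is unbounded (there is no constant C ≥ 0 with ‖A x‖ ≤ C‖x‖ for all x ∈ D), such that for every λ ∈ ℂ the following equivalence holds: λ ∉ σ if and only if there exists a bounded linear operator R : H → H with R(H) ⊆ D, (A − λI)(R y) = y for all y ∈ H, and R((A − λI) x) = x for all x ∈ D. -/

import Mathlib

/-!
The inverse of an injective quasinilpotent operator `V` with dense range is closed, densely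
defined and has empty spectrum: `1 - z V` is invertible for every `z`, and `(1 - z V)⁻¹ V` is the
resolvent of `V⁻¹` at `z`. A bilateral weighted shift with nonzero weights tending to zero is such
a `V`, and its inverse is unbounded. The Hilbert sum of this `V⁻¹` with the multiplications by all
points of `σ`, each on a copy of the same space, has spectrum `σ`: a point of `σ` is an eigenvalue
of one summand, and at a point outside the closed set `σ` the resolvents of the multiplications
are uniformly bounded, by the reciprocal of the distance to `σ`.
-/

open Filter Function Topology
open scoped ENNReal NNReal

universe u

section Unbounded

variable {𝕜 E F : Type*} [NontriviallyNormedField 𝕜] [NormedAddCommGroup E] [NormedSpace 𝕜 E]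
  [NormedAddCommGroup F] [NormedSpace 𝕜 F]

/-- Boundedness of an unbounded operator `A` on its domain. -/
def IsBoundedPMap (A : E →ₗ.[𝕜] F) : Prop :=
  ∃ C : ℝ, ∀ x : A.domain, ‖A x‖ ≤ C * ‖(x : E)‖

/-- `R` is the resolvent `(A - z)⁻¹`, a bounded operator defined everywhere. The condition is stated
on the graph of `A`, with no reference to the domain: `(A - z) x = y` exactly when `R y = x`. -/
def IsResolventAt (A : E →ₗ.[𝕜] E) (z : 𝕜) (R : E →L[𝕜] E) : Prop :=
  ∀ x y : E, (x, y + z • x) ∈ A.graph ↔ R y = x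

/-- The spectrum of an unbounded operator: the points at which it has no bounded resolvent. -/
def pmapSpectrum (A : E →ₗ.[𝕜] E) : Set 𝕜 :=
  {z | ¬ ∃ R : E →L[𝕜] E, IsResolventAt A z R}

theorem isBoundedPMap_iff_exists_graph_bound {A : E →ₗ.[𝕜] F} :
    IsBoundedPMap A ↔ ∃ C : ℝ, ∀ x y, (x, y) ∈ A.graph → ‖y‖ ≤ C * ‖x‖ := by
  refine exists_congr fun C => ⟨?_, fun h x => h x (A x) (A.mem_graph x)⟩
  rintro h x y hxy
  obtain ⟨x, rfl, rfl⟩ := A.mem_graph_iff.1 hxy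
  exact h x

theorem exists_apply_eq_of_tendsto_of_isClosed {A : E →ₗ.[𝕜] F} (hA : A.IsClosed)
    {u : ℕ → A.domain} {x : E} {y : F} (hx : Tendsto (fun k => (u k : E)) atTop (𝓝 x))
    (hy : Tendsto (fun k => A (u k)) atTop (𝓝 y)) : ∃ hx : x ∈ A.domain, A ⟨x, hx⟩ = y := by
  have hxy : (x, y) ∈ A.graph :=
    IsClosed.mem_of_tendsto hA (hx.prodMk_nhds hy) (.of_forall fun k => A.mem_graph (u k))
  obtain ⟨x, rfl, hy⟩ := A.mem_graph_iff.1 hxy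
  exact ⟨x.2, hy⟩

theorem isResolventAt_iff {A : E →ₗ.[𝕜] E} {z : 𝕜} {R : E →L[𝕜] E} :
    IsResolventAt A z R ↔ ∃ hR : ∀ y, R y ∈ A.domain,
      (∀ y, A ⟨R y, hR y⟩ - z • R y = y) ∧ ∀ x : A.domain, R (A x - z • (x : E)) = x := by
  constructor
  · intro h
    have hgraph (y : E) : (R y, y + z • R y) ∈ A.graph := (h _ y).2 rfl
    refine ⟨fun y => A.mem_domain_of_mem_graph (hgraph y), fun y => ?_, fun x => (h _ _).1 ?_⟩
    · rw [sub_eq_iff_eq_add]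
      exact A.mem_graph_snd_inj (A.mem_graph _) (hgraph y) rfl
    · rw [sub_add_cancel]
      exact A.mem_graph x
  · rintro ⟨hR, hleft, hright⟩ x y
    constructor
    · intro hxy
      obtain ⟨x, rfl, hx⟩ := A.mem_graph_iff.1 hxy
      rw [← hright x, hx, add_sub_cancel_right]
    · rintro rfl
      nth_rw 2 [← hleft y]
      rw [sub_add_cancel]
      exact A.mem_graph ⟨R y, hR y⟩

end Unbounded

section Inverse

variable {𝕜 E : Type*} [NontriviallyNormedField 𝕜] [NormedAddCommGroup E] [NormedSpace 𝕜 E]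

/-- The inverse of a bounded operator `V`, with domain the range of `V`. It is meaningful only
when `V` is injective. -/
noncomputable def inversePMap (V : E →L[𝕜] E) : E →ₗ.[𝕜] E :=
  ((V : E →ₗ[𝕜] E).toPMap ⊤).inverse

variable {V : E →L[𝕜] E}

theorem mem_graph_inversePMap (hV : Injective V) {x y : E} :
    (x, y) ∈ (inversePMap V).graph ↔ V y = x := by
  have hker : LinearMap.ker ((V : E →ₗ[𝕜] E).toPMap ⊤).toFun = ⊥ :=
    LinearMap.ker_eq_bot.2 fun a b hab => Subtype.ext (hV hab)
  rw [inversePMap, LinearPMap.inverse_graph hker]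
  simp

theorem isClosed_inversePMap (hV : Injective V) : (inversePMap V).IsClosed := by
  have hgraph : ((inversePMap V).graph : Set (E × E)) = {q | V q.2 = q.1} :=
    Set.ext fun q => mem_graph_inversePMap hV
  rw [LinearPMap.IsClosed, hgraph]
  exact isClosed_eq (V.continuous.comp continuous_snd) continuous_fst

theorem dense_domain_inversePMap (hV : DenseRange V) : Dense ((inversePMap V).domain : Set E) := by
  refine hV.mono ?_
  rintro _ ⟨y, rfl⟩
  rw [inversePMap, LinearPMap.inverse_domain]
  exact ⟨⟨y, trivial⟩, rfl⟩

theorem exists_isResolventAt_inversePMap (hV : Injective V) {z : 𝕜} (hz : IsUnit (1 - z • V)) :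
    ∃ R, IsResolventAt (inversePMap V) z R := by
  obtain ⟨U, hU⟩ := hz
  refine ⟨(↑U⁻¹ : E →L[𝕜] E) * V, fun x y => ?_⟩
  have hUx : (U : E →L[𝕜] E) x = x - z • V x := by simp [hU]
  have hinv (a b : E) : (↑U⁻¹ : E →L[𝕜] E) a = b ↔ (U : E →L[𝕜] E) b = a := by
    constructor
    · rintro rfl
      exact DFunLike.congr_fun U.mul_inv a
    · rintro rfl
      exact DFunLike.congr_fun U.inv_mul b
  rw [mem_graph_inversePMap hV, mul_apply_eq_comp, hinv, hUx, map_add, map_smul,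
    sub_eq_iff_eq_add, eq_comm]

end Inverse

section Scalar

variable {𝕜 E : Type*} [NontriviallyNormedField 𝕜] [NormedAddCommGroup E] [NormedSpace 𝕜 E]

variable (𝕜 E) in
/-- Multiplication by a scalar, as an unbounded operator defined on the whole space. -/
def scalarPMap (s : 𝕜) : E →ₗ.[𝕜] E :=
  (s • LinearMap.id).toPMap ⊤

theorem mem_graph_scalarPMap {s : 𝕜} {x y : E} : (x, y) ∈ (scalarPMap 𝕜 E s).graph ↔ y = s • x := by
  simp [scalarPMap, LinearPMap.mem_graph_iff, eq_comm]

theorem isClosed_scalarPMap (s : 𝕜) : (scalarPMap 𝕜 E s).IsClosed := by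
  have hgraph : ((scalarPMap 𝕜 E s).graph : Set (E × E)) = {q | q.2 = s • q.1} :=
    Set.ext fun q => mem_graph_scalarPMap
  rw [LinearPMap.IsClosed, hgraph]
  exact isClosed_eq continuous_snd (continuous_fst.const_smul s)

theorem isResolventAt_scalarPMap {s z : 𝕜} (h : s ≠ z) :
    IsResolventAt (scalarPMap 𝕜 E s) z ((s - z)⁻¹ • ContinuousLinearMap.id 𝕜 E) := by
  intro x y
  rw [mem_graph_scalarPMap, smul_apply, ContinuousLinearMap.id_apply,
    inv_smul_eq_iff₀ (sub_ne_zero.2 h), sub_smul, eq_sub_iff_add_eq]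

theorem mem_pmapSpectrum_scalarPMap [Nontrivial E] (s : 𝕜) :
    s ∈ pmapSpectrum (scalarPMap 𝕜 E s) := by
  rintro ⟨R, hR⟩
  obtain ⟨x, hx⟩ := exists_ne (0 : E)
  have hRx : R 0 = x := (hR x 0).1 (mem_graph_scalarPMap.2 (zero_add _))
  exact hx (hRx.symm.trans (map_zero R))

end Scalar

section DirectSum

variable {ι 𝕜 : Type*} [NontriviallyNormedField 𝕜] {p : ℝ≥0∞}
  {E F : ι → Type*} [∀ i, NormedAddCommGroup (E i)] [∀ i, NormedSpace 𝕜 (E i)]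
  [∀ i, NormedAddCommGroup (F i)] [∀ i, NormedSpace 𝕜 (F i)]

theorem dense_of_forall_dense_single [DecidableEq ι] [Fact (1 ≤ p)] (hp : p ≠ ∞)
    {S : Submodule 𝕜 (lp E p)} (hS : ∀ i, Dense {a | lp.single p i a ∈ S}) :
    Dense (S : Set (lp E p)) := by
  intro f
  have hsingle (i : ι) (a : E i) : lp.single p i a ∈ S.topologicalClosure :=
    map_mem_closure (lp.singleContinuousLinearMap 𝕜 E p i).continuous (hS i a) fun _ h => h
  exact S.isClosed_topologicalClosure.mem_of_tendsto (lp.hasSum_single hp f)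
    (.of_forall fun s => S.topologicalClosure.sum_mem fun i _ => hsingle i (f i))

variable (p) in
/-- The `ℓᵖ`-direct sum of unbounded operators, acting componentwise on its maximal domain. It is
defined through its graph, so that no domain has to be written down. -/
noncomputable def lpSum (A : ∀ i, E i →ₗ.[𝕜] F i) : lp E p →ₗ.[𝕜] lp F p :=
  (⨅ i, (A i).graph.comap ((lp.evalₗ E p i).prodMap (lp.evalₗ F p i))).toLinearPMap

variable {A : ∀ i, E i →ₗ.[𝕜] F i}

theorem mem_graph_lpSum {x : lp E p} {y : lp F p} :
    (x, y) ∈ (lpSum p A).graph ↔ ∀ i, (x i, y i) ∈ (A i).graph := by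
  rw [lpSum, Submodule.toLinearPMap_graph_eq]
  · simp [Submodule.mem_iInf]
  · rintro ⟨x, y⟩ hxy hx
    ext i
    exact (A i).graph_fst_eq_zero_snd (Submodule.mem_iInf _ |>.1 hxy i) (by simp_all)

theorem isClosed_lpSum [Fact (1 ≤ p)] (hA : ∀ i, (A i).IsClosed) : (lpSum p A).IsClosed := by
  have hgraph : ((lpSum p A).graph : Set (lp E p × lp F p)) =
      ⋂ i, {q | (q.1 i, q.2 i) ∈ (A i).graph} := by
    ext ⟨x, y⟩
    simp only [SetLike.mem_coe, mem_graph_lpSum, Set.mem_iInter, Set.mem_ofPred_eq]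
  rw [LinearPMap.IsClosed, hgraph]
  refine isClosed_iInter fun i => IsClosed.preimage ?_ (hA i)
  exact ((lp.evalCLM 𝕜 E p i).continuous.comp continuous_fst).prodMk
    ((lp.evalCLM 𝕜 F p i).continuous.comp continuous_snd)

theorem single_mem_graph_lpSum [DecidableEq ι] {i : ι} {x : E i} {y : F i}
    (hxy : (x, y) ∈ (A i).graph) : (lp.single p i x, lp.single p i y) ∈ (lpSum p A).graph := by
  refine mem_graph_lpSum.2 fun j => ?_
  obtain rfl | hij := eq_or_ne j i
  · simpa only [lp.single_apply_self] using hxy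
  · rw [lp.single_apply_ne _ _ _ hij, lp.single_apply_ne _ _ _ hij]
    exact (A j).graph.zero_mem

theorem dense_domain_lpSum [Fact (1 ≤ p)] (hp : p ≠ ∞)
    (hA : ∀ i, Dense ((A i).domain : Set (E i))) : Dense ((lpSum p A).domain : Set (lp E p)) := by
  classical
  exact dense_of_forall_dense_single hp fun i => (hA i).mono fun x hx =>
    LinearPMap.mem_domain_of_mem_graph (single_mem_graph_lpSum ((A i).mem_graph ⟨x, hx⟩))

theorem IsBoundedPMap.of_lpSum [Fact (1 ≤ p)] (h : IsBoundedPMap (lpSum p A)) (i : ι) :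
    IsBoundedPMap (A i) := by
  classical
  have hp : 0 < p := zero_lt_one.trans_le Fact.out
  obtain ⟨C, hC⟩ := isBoundedPMap_iff_exists_graph_bound.1 h
  refine isBoundedPMap_iff_exists_graph_bound.2 ⟨C, fun x y hxy => ?_⟩
  simpa only [lp.norm_single hp] using hC _ _ (single_mem_graph_lpSum hxy)

variable {A : ∀ i, E i →ₗ.[𝕜] E i} {z : 𝕜} [Fact (1 ≤ p)]

theorem isResolventAt_lpSum {R : ∀ i, E i →L[𝕜] E i} (hR : ∀ i, IsResolventAt (A i) z (R i))
    {K : ℝ} (hK : 0 ≤ K) (hRK : ∀ i, ‖R i‖ ≤ K) :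
    IsResolventAt (lpSum p A) z (lp.mapCLM p R hK hRK) := by
  intro x y
  rw [mem_graph_lpSum, lp.ext_iff, funext_iff]
  exact forall_congr' fun i => hR i (x i) (y i)

theorem IsResolventAt.of_lpSum [DecidableEq ι] {R : lp E p →L[𝕜] lp E p}
    (hR : IsResolventAt (lpSum p A) z R) (i : ι) :
    IsResolventAt (A i) z
      (lp.evalCLM 𝕜 E p i ∘L R ∘L lp.singleContinuousLinearMap 𝕜 E p i) := by
  intro x y
  constructor
  · intro hxy
    have hsingle := single_mem_graph_lpSum (p := p) hxy
    rw [lp.single_add, lp.single_smul] at hsingle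
    have hRy : R (lp.single p i y) = lp.single p i x := (hR _ _).1 hsingle
    exact (congrArg (fun f : lp E p => f i) hRy).trans (lp.single_apply_self p i x)
  · rintro rfl
    have hgraph := mem_graph_lpSum.1 ((hR _ (lp.single p i y)).2 rfl) i
    rwa [lp.coeFn_add, lp.coeFn_smul, Pi.add_apply, Pi.smul_apply, lp.single_apply_self] at hgraph

end DirectSum

section AdjoinScalars

variable {𝕜 E : Type*} [NontriviallyNormedField 𝕜] [NormedAddCommGroup E] [NormedSpace 𝕜 E]

/-- The family consisting of `A`, at the index `none`, and of the multiplications by the points of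
`σ`. Its direct sum enlarges the spectrum of `A` by `σ`. -/
def adjoinScalars (A : E →ₗ.[𝕜] E) (σ : Set 𝕜) (i : Option σ) : E →ₗ.[𝕜] E :=
  i.elim A fun s => scalarPMap 𝕜 E s

theorem pmapSpectrum_lpSum_adjoinScalars [Nontrivial E] (p : ℝ≥0∞) [Fact (1 ≤ p)]
    (A : E →ₗ.[𝕜] E) {σ : Set 𝕜} (hσ : IsClosed σ) :
    pmapSpectrum (lpSum p (adjoinScalars A σ)) = pmapSpectrum A ∪ σ := by
  classical
  refine Set.Subset.antisymm (fun z hz => ?_) ?_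
  · by_contra! hz'
    obtain ⟨hzA, hzσ⟩ := not_or.1 hz'
    obtain ⟨R, hR⟩ := not_not.1 hzA
    obtain ⟨ε, hε, hball⟩ := Metric.isOpen_iff.1 hσ.isOpen_compl z hzσ
    have hdist (s : σ) : ε ≤ ‖(s : 𝕜) - z‖ := by
      rw [← dist_eq_norm]
      exact not_lt.1 fun hs => hball hs s.2
    refine hz ⟨_, isResolventAt_lpSum
      (R := fun i => i.elim R fun s => ((s : 𝕜) - z)⁻¹ • ContinuousLinearMap.id 𝕜 E)
      (K := max ‖R‖ ε⁻¹) ?_ (by positivity) ?_⟩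
    · rintro (_ | s)
      · exact hR
      · exact isResolventAt_scalarPMap fun hs => hzσ (hs ▸ s.2)
    · rintro (_ | s)
      · exact le_max_left _ _
      · calc ‖((s : 𝕜) - z)⁻¹ • ContinuousLinearMap.id 𝕜 E‖
            = ‖(s : 𝕜) - z‖⁻¹ := by rw [norm_smul, ContinuousLinearMap.norm_id, mul_one, norm_inv]
          _ ≤ ε⁻¹ := inv_anti₀ hε (hdist s)
          _ ≤ max ‖R‖ ε⁻¹ := le_max_right _ _
  · rintro z (hz | hz) ⟨R, hR⟩
    · exact hz ⟨_, hR.of_lpSum none⟩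
    · exact mem_pmapSpectrum_scalarPMap (E := E) z ⟨_, hR.of_lpSum (some ⟨z, hz⟩)⟩

end AdjoinScalars

theorem isUnit_one_sub_of_norm_pow_lt_one {R : Type*} [NormedRing R] [HasSummableGeomSeries R]
    {x : R} {n : ℕ} (h : ‖x ^ n‖ < 1) : IsUnit (1 - x) := by
  have hunit : IsUnit ((1 - x) * ∑ k ∈ Finset.range n, x ^ k) := by
    rw [mul_neg_geom_sum]
    exact isUnit_one_sub_of_norm_lt_one h
  have hcomm : Commute (1 - x) (∑ k ∈ Finset.range n, x ^ k) :=
    .sum_right _ _ _ fun k _ => (Commute.one_left _).sub_left (Commute.self_pow x k)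
  exact (hcomm.isUnit_mul_iff.1 hunit).1

theorem exists_prod_nnnorm_le_mul_pow_card {ι E : Type*} [SeminormedAddCommGroup E]
    {w : ι → E}
    (hw : Tendsto w cofinite (𝓝 0)) {δ : ℝ≥0} (hδ : 0 < δ) :
    ∃ M : ℝ≥0, ∀ s : Finset ι, ∏ i ∈ s, ‖w i‖₊ ≤ M * δ ^ s.card := by
  classical
  have hfin : {i | ¬ ‖w i‖₊ < δ}.Finite :=
    eventually_cofinite.1 (hw.nnnorm.eventually_lt_const (by simpa using hδ))
  set B := hfin.toFinset
  -- Only the indices in `B` can push the product above `δ ^ s.card`; `M` collects their excess.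
  refine ⟨∏ i ∈ B, max 1 (‖w i‖₊ / δ), fun s => ?_⟩
  have hle_one {i : ι} (hi : i ∉ B) : ‖w i‖₊ / δ ≤ 1 :=
    div_le_one_of_le₀ (by simpa [B] using hi : ‖w i‖₊ < δ).le zero_le
  calc ∏ i ∈ s, ‖w i‖₊ = (∏ i ∈ s, ‖w i‖₊ / δ) * δ ^ s.card := by
        rw [Finset.prod_div_distrib, Finset.prod_const, div_mul_cancel₀ _ (pow_ne_zero _ hδ.ne')]
    _ ≤ (∏ i ∈ B, max 1 (‖w i‖₊ / δ)) * δ ^ s.card := by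
        gcongr ?_ * _
        calc ∏ i ∈ s, ‖w i‖₊ / δ ≤ ∏ i ∈ s, max 1 (‖w i‖₊ / δ) :=
              Finset.prod_le_prod' fun i _ => le_max_right _ _
          _ ≤ ∏ i ∈ s ∪ B, max 1 (‖w i‖₊ / δ) :=
              Finset.prod_le_prod_of_subset_of_one_le' Finset.subset_union_left
                fun i _ _ => le_max_left _ _
          _ = ∏ i ∈ B, max 1 (‖w i‖₊ / δ) :=
              (Finset.prod_subset Finset.subset_union_right fun i _ hi =>
                max_eq_left (hle_one hi)).symm

section Reindex

variable {ι κ 𝕜 E : Type*} [NontriviallyNormedField 𝕜] [NormedAddCommGroup E] [NormedSpace 𝕜 E]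
  {p : ℝ≥0∞}

theorem memℓp_comp_of_injective {f : κ → E} (hf : Memℓp f p) {e : ι → κ}
    (he : Injective e) : Memℓp (f ∘ e) p := by
  obtain rfl | rfl | hp := p.trichotomy
  · exact memℓp_zero (hf.finite_dsupport.preimage he.injOn)
  · exact memℓp_infty (hf.bddAbove.mono (Set.range_comp_subset_range e fun k => ‖f k‖))
  · exact memℓp_gen ((hf.summable hp).comp_injective he)

theorem norm_lp_comp_le [Fact (1 ≤ p)] {e : ι → κ} (he : Injective e)
    (f : lp (fun _ : κ => E) p) :
    ‖(⟨f ∘ e, memℓp_comp_of_injective f.2 he⟩ : lp (fun _ : ι => E) p)‖ ≤ ‖f‖ := by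
  obtain rfl | hp := p.dichotomy
  · exact lp.norm_le_of_forall_le (norm_nonneg f) fun i => lp.norm_apply_le_norm (by simp) f (e i)
  · have hp₀ : 0 < p.toReal := zero_lt_one.trans_le hp
    refine lp.norm_le_of_tsum_le hp₀ (norm_nonneg f) ?_
    rw [lp.norm_rpow_eq_tsum hp₀]
    exact tsum_comp_le_tsum_of_inj ((lp.memℓp f).summable hp₀) (fun _ => by positivity) he

variable (𝕜 E p) in
/-- Reindexing of `ℓᵖ` along an injective map, as a contraction. -/
noncomputable def lpPrecomp [Fact (1 ≤ p)] (e : ι ↪ κ) :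
    lp (fun _ : κ => E) p →L[𝕜] lp (fun _ : ι => E) p :=
  LinearMap.mkContinuous
    { toFun := fun f => ⟨f ∘ e, memℓp_comp_of_injective f.2 e.injective⟩
      map_add' := fun _ _ => rfl
      map_smul' := fun _ _ => rfl } 1
    fun f => (norm_lp_comp_le e.injective f).trans_eq (one_mul _).symm

theorem norm_lpPrecomp_le [Fact (1 ≤ p)] (e : ι ↪ κ) : ‖lpPrecomp 𝕜 E p e‖ ≤ 1 :=
  LinearMap.mkContinuous_norm_le _ zero_le_one _

end Reindex

section WeightedShift

variable {𝕜 : Type*} [NontriviallyNormedField 𝕜] {p : ℝ≥0∞} [Fact (1 ≤ p)]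

variable (𝕜) in
theorem exists_lp_infty_ne_zero_tendsto_zero :
    ∃ w : lp (fun _ : ℤ => 𝕜) ∞, (∀ n, w n ≠ 0) ∧ Tendsto w cofinite (𝓝 0) := by
  obtain ⟨c, hc₀, hc₁⟩ := NormedField.exists_norm_lt_one 𝕜
  have hnatAbs : Tendsto Int.natAbs cofinite atTop := by
    rw [← Nat.cofinite_eq_atTop]
    refine .cofinite_of_finite_preimage_singleton fun k => ?_
    exact (Set.finite_Icc (-k : ℤ) k).subset fun n (hn : n.natAbs = k) => by grind
  have hw : Memℓp (fun n : ℤ => c ^ n.natAbs) ∞ := by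
    refine memℓp_infty ⟨1, ?_⟩
    rintro _ ⟨n, rfl⟩
    simpa only [norm_pow] using pow_le_one₀ (norm_nonneg c) hc₁.le
  exact ⟨⟨_, hw⟩, fun n => pow_ne_zero _ (norm_pos_iff.1 hc₀),
    (tendsto_pow_atTop_nhds_zero_of_norm_lt_one hc₁).comp hnatAbs⟩

variable (p) in
/-- The bilateral weighted backward shift `(V f) n = w n * f (n + 1)` on `ℓᵖ(ℤ)`. -/
noncomputable def weightedShift (w : lp (fun _ : ℤ => 𝕜) ∞) :
    lp (fun _ : ℤ => 𝕜) p →L[𝕜] lp (fun _ : ℤ => 𝕜) p :=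
  lp.mapCLM p (fun n => w n • ContinuousLinearMap.id 𝕜 𝕜) (norm_nonneg w)
      (fun n => by simpa [norm_smul] using lp.norm_apply_le_norm ENNReal.top_ne_zero w n) ∘L
    lpPrecomp 𝕜 𝕜 p (addRightEmbedding 1)

variable {w : lp (fun _ : ℤ => 𝕜) ∞}

theorem weightedShift_apply (f : lp (fun _ : ℤ => 𝕜) p) (n : ℤ) :
    weightedShift p w f n = w n * f (n + 1) :=
  rfl

theorem weightedShift_pow_apply (m : ℕ) (f : lp (fun _ : ℤ => 𝕜) p) (n : ℤ) :
    (weightedShift p w ^ m) f n = (∏ k ∈ Finset.range m, w (n + k)) * f (n + m) := by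
  induction m generalizing f with
  | zero => simp
  | succ m ih =>
    rw [pow_succ, mul_apply_eq_comp, ih, weightedShift_apply, Finset.prod_range_succ, mul_assoc,
      Nat.cast_succ, add_assoc]

theorem norm_weightedShift_pow_le {m : ℕ} {K : ℝ} (hK : 0 ≤ K)
    (hw : ∀ n : ℤ, ‖∏ k ∈ Finset.range m, w (n + k)‖ ≤ K) : ‖weightedShift p w ^ m‖ ≤ K := by
  have hdiag (n : ℤ) :
      ‖(∏ k ∈ Finset.range m, w (n + k)) • ContinuousLinearMap.id 𝕜 𝕜‖ ≤ K := by
    simpa only [norm_smul, ContinuousLinearMap.norm_id, mul_one] using hw n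
  have hpow : weightedShift p w ^ m =
      lp.mapCLM p _ hK hdiag ∘L lpPrecomp 𝕜 𝕜 p (addRightEmbedding (m : ℤ)) := by
    ext f n
    exact weightedShift_pow_apply m f n
  calc ‖weightedShift p w ^ m‖
      ≤ ‖lp.mapCLM p _ hK hdiag‖ * ‖lpPrecomp 𝕜 𝕜 p (addRightEmbedding (m : ℤ))‖ := by
        rw [hpow]
        exact ContinuousLinearMap.opNorm_comp_le _ _
    _ ≤ K * 1 := by
        gcongr
        · exact lp.norm_mapCLM_le p _ hK hdiag
        · exact norm_lpPrecomp_le _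
    _ = K := mul_one K

theorem isUnit_one_sub_smul_weightedShift [CompleteSpace 𝕜] (hw : Tendsto w cofinite (𝓝 0))
    (z : 𝕜) : IsUnit (1 - z • weightedShift p w) := by
  set δ : ℝ≥0 := (2 * (‖z‖₊ + 1))⁻¹
  obtain ⟨M, hM⟩ := exists_prod_nnnorm_le_mul_pow_card hw (δ := δ) (by positivity)
  have hpow (m : ℕ) : ‖weightedShift p w ^ m‖ ≤ M * δ ^ m := by
    refine norm_weightedShift_pow_le (by positivity) fun n => ?_
    have hwindow : ∏ k ∈ Finset.range m, ‖w (n + k)‖₊ ≤ M * δ ^ m := by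
      simpa only [Finset.prod_map, Finset.card_map, Finset.card_range,
        Function.Embedding.trans_apply, Nat.castEmbedding_apply, addLeftEmbedding_apply] using
        hM ((Finset.range m).map (Nat.castEmbedding.trans (addLeftEmbedding n)))
    rw [← coe_nnnorm, nnnorm_prod]
    exact_mod_cast hwindow
  have hzδ : ‖z‖ * δ ≤ 1 / 2 := by
    rw [NNReal.coe_inv, mul_inv_le_iff₀ (by positivity)]
    push_cast
    linarith
  obtain ⟨m, hm⟩ : ∃ m : ℕ, (M : ℝ) * (1 / 2) ^ m < 1 := by
    have hgeom : Tendsto (fun m : ℕ => (M : ℝ) * (1 / 2) ^ m) atTop (𝓝 0) := by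
      simpa only [mul_zero] using
        (tendsto_pow_atTop_nhds_zero_of_lt_one one_half_pos.le one_half_lt_one).const_mul (M : ℝ)
    exact (hgeom.eventually_lt_const one_pos).exists
  refine isUnit_one_sub_of_norm_pow_lt_one (n := m) ?_
  calc ‖(z • weightedShift p w) ^ m‖ = ‖z‖ ^ m * ‖weightedShift p w ^ m‖ := by
        rw [smul_pow, norm_smul, norm_pow]
    _ ≤ ‖z‖ ^ m * (M * δ ^ m) := by gcongr; exact hpow m
    _ = M * (‖z‖ * δ) ^ m := by ring
    _ ≤ M * (1 / 2) ^ m := by gcongr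
    _ < 1 := hm

theorem injective_weightedShift (hw : ∀ n, w n ≠ 0) : Injective (weightedShift p w) := by
  refine (injective_iff_map_eq_zero _).2 fun f hf => lp.ext (funext fun n => ?_)
  have hn : w (n - 1) * f (n - 1 + 1) = 0 := congrArg (fun g : lp _ p => g (n - 1)) hf
  rw [sub_add_cancel] at hn
  exact (mul_eq_zero.1 hn).resolve_left (hw _)

theorem weightedShift_single (n : ℤ) (a : 𝕜) :
    weightedShift p w (lp.single p (n + 1) a) = lp.single p n (w n * a) := by
  ext k
  rw [weightedShift_apply]
  obtain rfl | hk := eq_or_ne k n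
  · simp only [lp.single_apply_self]
  · rw [lp.single_apply_ne _ _ _ hk, lp.single_apply_ne _ _ _ (by simpa using hk), mul_zero]

theorem denseRange_weightedShift (hp : p ≠ ∞) (hw : ∀ n, w n ≠ 0) :
    DenseRange (weightedShift p w) := by
  refine dense_of_forall_dense_single (S := LinearMap.range (weightedShift p w).toLinearMap) hp
    fun n => dense_univ.mono fun a _ => ⟨lp.single p (n + 1) ((w n)⁻¹ * a), ?_⟩
  exact (weightedShift_single _ _).trans (by rw [mul_inv_cancel_left₀ (hw n)])

theorem not_isBoundedPMap_inversePMap_weightedShift (hw : ∀ n, w n ≠ 0)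
    (hlim : Tendsto w cofinite (𝓝 0)) : ¬ IsBoundedPMap (inversePMap (weightedShift p w)) := by
  intro h
  have hp : 0 < p := zero_lt_one.trans_le Fact.out
  obtain ⟨C, hC⟩ := isBoundedPMap_iff_exists_graph_bound.1 h
  have hbound (n : ℤ) : 1 ≤ C * ‖w n‖ := by
    have hn := hC _ _ ((mem_graph_inversePMap (injective_weightedShift hw)).2
      (weightedShift_single (p := p) n 1))
    rwa [lp.norm_single hp, lp.norm_single hp, norm_one, mul_one] at hn
  have hlim' : Tendsto (fun n => C * ‖w n‖) cofinite (𝓝 0) := by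
    simpa using hlim.norm.const_mul C
  exact zero_lt_one.not_ge (ge_of_tendsto' hlim' hbound)

variable (𝕜) in
theorem exists_closed_operator_pmapSpectrum_eq_empty [CompleteSpace 𝕜] (hp : p ≠ ∞) :
    ∃ A : lp (fun _ : ℤ => 𝕜) p →ₗ.[𝕜] lp (fun _ : ℤ => 𝕜) p,
      Dense (A.domain : Set (lp (fun _ : ℤ => 𝕜) p)) ∧ A.IsClosed ∧ ¬ IsBoundedPMap A ∧
        pmapSpectrum A = ∅ := by
  obtain ⟨w, hw, hlim⟩ := exists_lp_infty_ne_zero_tendsto_zero 𝕜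
  have hinj : Injective (weightedShift p w) := injective_weightedShift hw
  refine ⟨inversePMap (weightedShift p w),
    dense_domain_inversePMap (denseRange_weightedShift hp hw), isClosed_inversePMap hinj,
    not_isBoundedPMap_inversePMap_weightedShift hw hlim, ?_⟩
  refine Set.eq_empty_of_forall_notMem fun z hz => hz ?_
  exact exists_isResolventAt_inversePMap hinj (isUnit_one_sub_smul_weightedShift hlim z)

end WeightedShift

theorem exists_unbounded_closed_operator_with_spectrum_general {𝕜 : Type u} [RCLike 𝕜] {σ : Set 𝕜}
    (hσ : IsClosed σ) :
    ∃ (H : Type u) (_ : NormedAddCommGroup H) (_ : InnerProductSpace 𝕜 H) (_ : CompleteSpace H)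
      (A : H →ₗ.[𝕜] H),
      Dense (A.domain : Set H) ∧ A.IsClosed ∧ ¬ IsBoundedPMap A ∧ pmapSpectrum A = σ := by
  have hp : (2 : ℝ≥0∞) ≠ ∞ := ENNReal.ofNat_ne_top
  obtain ⟨A, hdense, hclosed, hunbdd, hspec⟩ :=
    exists_closed_operator_pmapSpectrum_eq_empty (p := 2) 𝕜 hp
  refine ⟨lp (fun _ : Option σ => lp (fun _ : ℤ => 𝕜) 2) 2, inferInstance, inferInstance,
    inferInstance, lpSum 2 (adjoinScalars A σ), dense_domain_lpSum hp ?_, isClosed_lpSum ?_,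
    fun h => hunbdd (h.of_lpSum none), ?_⟩
  · rintro (_ | _)
    · exact hdense
    · exact dense_univ
  · rintro (_ | s)
    · exact hclosed
    · exact isClosed_scalarPMap (s : 𝕜)
  · have : Nontrivial (lp (fun _ : ℤ => 𝕜) 2) :=
      (lp.isometry_single (E := fun _ : ℤ => 𝕜) (p := 2) 0).injective.nontrivial
    rw [pmapSpectrum_lpSum_adjoinScalars 2 A hσ, hspec, Set.empty_union]

/-- For every nonempty closed subset `σ` of `ℂ` there exist a complex Hilbert space `H`,
a dense subspace `D` of `H`, and an unbounded closed linear operator `A : D → H`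
whose spectrum is exactly `σ`. -/
theorem exists_unbounded_closed_operator_with_spectrum
    (σ : Set ℂ) (hσ : σ.Nonempty) (hcl : IsClosed σ) :
    ∃ (H : Type) (_ : NormedAddCommGroup H) (_ : InnerProductSpace ℂ H) (_ : CompleteSpace H)
      (D : Submodule ℂ H) (A : D →ₗ[ℂ] H),
      Dense (D : Set H) ∧
      -- closed graph
      (∀ (xk : ℕ → D) (x y : H),
        Filter.Tendsto (fun k => (xk k : H)) Filter.atTop (nhds x) →
        Filter.Tendsto (fun k => A (xk k)) Filter.atTop (nhds y) →
        ∃ hx : x ∈ D, A ⟨x, hx⟩ = y) ∧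
      -- unbounded
      (¬ ∃ C : ℝ, 0 ≤ C ∧ ∀ x : D, ‖A x‖ ≤ C * ‖(x : H)‖) ∧
      -- the spectrum of A is σ
      (∀ lam : ℂ, lam ∉ σ ↔
        ∃ (R : H →L[ℂ] H) (hR : ∀ y : H, R y ∈ D),
          (∀ y : H, A ⟨R y, hR y⟩ - lam • R y = y) ∧
          (∀ x : D, R (A x - lam • (x : H)) = x)) := by
  obtain ⟨H, _, _, _, A, hdense, hclosed, hunbdd, rfl⟩ :=
    exists_unbounded_closed_operator_with_spectrum_general hcl
  exact ⟨H, _, _, ‹_›, A.domain, A.toFun, hdense,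
    fun _ _ _ => exists_apply_eq_of_tendsto_of_isClosed hclosed,
    fun ⟨C, _, hC⟩ => hunbdd ⟨C, hC⟩,
    fun _ => not_not.trans (exists_congr fun _ => isResolventAt_iff)⟩
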